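/- Let d ≥ 2 and let u : ℤ^d → [0,∞) be finitely supported. Then there exists K ∈ ℕ such that R_e(R^K u) = R^K u for every e ∈ E⃗ (in particular R^k u = R^K u for all k ≥ K). -/

import Mathlib

open Filter Topology

noncomputable section

abbrev ZLat (d : ℕ) := Fin d → ℤ

def stdVec (d : ℕ) (i : Fin d) : Fin d → ℝ := fun j => if j = i then 1 else 0

/-- The set of directions E⃗ ⊆ ℝ^d. -/
def Evec (d : ℕ) : Set (Fin d → ℝ) :=
  {e | (∃ i, e = stdVec d i) ∨
    (∃ i j : Fin d, i < j ∧ e = fun k => (stdVec d i k + stdVec d j k) / 2) ∨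
    (∃ i j : Fin d, i < j ∧ e = fun k => (stdVec d i k - stdVec d j k) / 2)}

/-- A fixed enumeration of E⃗ (for d = 2 it is e₁, e₂, (e₁+e₂)/2, (e₁-e₂)/2). -/
def EvecList (d : ℕ) : List (Fin d → ℝ) :=
  ((List.finRange d).map (stdVec d)) ++
  ((List.finRange d).flatMap fun i => (List.finRange d).filterMap fun j =>
    if i < j then some (fun k => (stdVec d i k + stdVec d j k) / 2) else none) ++
  ((List.finRange d).flatMap fun i => (List.finRange d).filterMap fun j =>
    if i < j then some (fun k => (stdVec d i k - stdVec d j k) / 2) else none)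

/-- The n-th largest value of `u`, counted with multiplicity (1-indexed). -/
def nthLargest {α : Type*} (u : α → NNReal) (n : ℕ) : NNReal :=
  sSup {t | ∃ Ω : Finset α, Ω.card = n ∧ ∀ x ∈ Ω, t ≤ u x}

/-- The 1-indexed position of the point with doubled coordinate `m` in the
spiral order 0, 1, −1, 2, −2, … (for even m) resp. 1/2, −1/2, 3/2, −3/2, … (for odd m). -/
def posIdx (m : ℤ) : ℕ := (if 0 < m then m else 1 - m).toNat

/-- `x` and `y` lie on a common line with direction `e`. -/
def sameLine {d : ℕ} (e : Fin d → ℝ) (x y : ZLat d) : Prop :=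
  ∃ c : ℝ, (fun i => (x i : ℝ) - (y i : ℝ)) = c • e

/-- Twice the inner product ⟨e, x⟩, as an integer. -/
def pairing {d : ℕ} (e : Fin d → ℝ) (x : ZLat d) : ℤ :=
  ⌊2 * ∑ i, e i * (x i : ℝ)⌋

/-- One-step rearrangement `R_e`. -/
def stepR {d : ℕ} (e : Fin d → ℝ) (u : ZLat d → NNReal) : ZLat d → NNReal :=
  fun x => nthLargest (fun y : {y : ZLat d // sameLine e x y} => u y.1) (posIdx (pairing e x))

/-- `R^k u` : k successive one-step rearrangements cycling through the fixed enumeration. -/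
def iterR (d : ℕ) (u : ZLat d → NNReal) : ℕ → ZLat d → NNReal
  | 0 => u
  | k + 1 => stepR ((EvecList d).getD (k % (EvecList d).length) 0) (iterR d u k)

/-- The Schwarz rearrangement on ℤ^d : pointwise limit of `R^k u`. -/
def RZd (d : ℕ) (u : ZLat d → NNReal) : ZLat d → NNReal :=
  fun x => limUnder atTop fun k => iterR d u k x

def Admissible {α : Type*} (u : α → NNReal) : Prop :=
  ∀ t : NNReal, 0 < t → {x | t < u x}.Finite

def Equimeasurable {α : Type*} (u v : α → NNReal) : Prop :=
  ∀ t : NNReal, 0 < t → Nonempty ({x | t < u x} ≃ {x | t < v x})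

/-- Graph distance (ℓ¹ distance) on the lattice ℤ^d. -/
def latDist {d : ℕ} (x y : ZLat d) : ℕ := ∑ i, (x i - y i).natAbs

/-- The i-th standard basis vector of ℤ^d. -/
def latE {d : ℕ} (i : Fin d) : ZLat d := fun j => if j = i then 1 else 0

/-- ‖∇u‖_p^p : the p-Sobolev energy, summing over each edge {x, x+e_i} once. -/
def gradEnergy (d : ℕ) (p : ℝ) (u : ZLat d → NNReal) : ENNReal :=
  ∑' (x : ZLat d) (i : Fin d), ENNReal.ofReal (|(u (x + latE i) : ℝ) - (u x : ℝ)| ^ p)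

/-- ‖∇u‖_p. -/
def gradNorm (d : ℕ) (p : ℝ) (u : ZLat d → NNReal) : ENNReal :=
  gradEnergy d p u ^ (1 / p)

/-- Graph automorphism of the lattice graph ℤ^d. -/
def IsLatAuto {d : ℕ} (σ : ZLat d ≃ ZLat d) : Prop :=
  ∀ x y : ZLat d, latDist (σ x) (σ y) = 1 ↔ latDist x y = 1

def Supermodular (G : NNReal → NNReal → NNReal) : Prop :=
  ∀ s t s₀ t₀ : NNReal, G (s + s₀) t + G s (t + t₀) ≤ G (s + s₀) (t + t₀) + G s t

def StrictlySupermodular (G : NNReal → NNReal → NNReal) : Prop :=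
  ∀ s t s₀ t₀ : NNReal, 0 < s₀ → 0 < t₀ →
    G (s + s₀) t + G s (t + t₀) < G (s + s₀) (t + t₀) + G s t

/-- The values of `u` are strictly decreasing: a₁ > a₂ > a₃ > ⋯ . -/
def StrictRan {α : Type*} (u : α → NNReal) : Prop :=
  ∀ n : ℕ, 0 < n → nthLargest u (n + 1) < nthLargest u n

/-!
Superlevel sets turn the rearrangement of functions into a rearrangement of sets: on each line, a
finite set is replaced by equally many points of smallest rank. There is a point `z`, close to the
origin and in general position, such that the distance to `z` increases strictly with the rank
along every line in every direction of `E⃗`. Hence each step lowers the sum of the squared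
distances to `z` unless it fixes the set; as these sums are integers up to a fixed scaling, the
sets stabilize. A finitely supported function has only finitely many superlevel sets, so they
stabilize together.
-/

section Exchange

variable {α β M : Type*} [DecidableEq α] [DecidableEq β] [AddCommMonoid M] [LinearOrder M]
  [IsOrderedCancelAddMonoid M] {A B : Finset α} {φ : α → M}

theorem sum_lt_sum_of_exchange (hcard : A.card = B.card) (hne : A ≠ B)
    (h : ∀ a ∈ A \ B, ∀ b ∈ B \ A, φ b < φ a) : ∑ x ∈ B, φ x < ∑ x ∈ A, φ x := by
  rw [← Finset.sum_sdiff_lt_sum_sdiff]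
  have hA : (A \ B).Nonempty :=
    Finset.sdiff_nonempty.2 fun hAB => hne (Finset.eq_of_subset_of_card_le hAB hcard.ge)
  have hcard' : (B \ A).card = (A \ B).card := Finset.card_sdiff_comm hcard.symm
  have hB : (B \ A).Nonempty := by rwa [← Finset.card_pos, hcard', Finset.card_pos]
  obtain ⟨a, ha, hmin⟩ := Finset.exists_min_image (A \ B) φ hA
  calc ∑ x ∈ B \ A, φ x < ∑ _x ∈ B \ A, φ a := Finset.sum_lt_sum_of_nonempty hB (h a ha)
    _ = (A \ B).card • φ a := by rw [Finset.sum_const, hcard']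
    _ ≤ ∑ x ∈ A \ B, φ x := Finset.card_nsmul_le_sum _ _ _ hmin

theorem sum_lt_sum_of_fiberwise_exchange (q : α → β)
    (hcard : ∀ c, (A.filter (q · = c)).card = (B.filter (q · = c)).card) (hne : A ≠ B)
    (h : ∀ a ∈ A \ B, ∀ b ∈ B \ A, q a = q b → φ b < φ a) :
    ∑ x ∈ B, φ x < ∑ x ∈ A, φ x := by
  have hlt (c : β) (hc : A.filter (q · = c) ≠ B.filter (q · = c)) :
      ∑ x ∈ B with q x = c, φ x < ∑ x ∈ A with q x = c, φ x :=
    sum_lt_sum_of_exchange (hcard c) hc fun a ha b hb => by grind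
  have hle (c : β) : ∑ x ∈ B with q x = c, φ x ≤ ∑ x ∈ A with q x = c, φ x := by
    by_cases hc : A.filter (q · = c) = B.filter (q · = c)
    · rw [hc]
    · exact (hlt c hc).le
  obtain ⟨x, hx⟩ : ∃ x, ¬(x ∈ A ↔ x ∈ B) := by simpa [Finset.ext_iff] using hne
  have hqx : A.filter (q · = q x) ≠ B.filter (q · = q x) := fun heq =>
    hx (by simpa using Finset.ext_iff.1 heq x)
  have hmaps {C : Finset α} (hC : C ⊆ A ∪ B) : ∀ y ∈ C, q y ∈ (A ∪ B).image q := fun _ hy =>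
    Finset.mem_image_of_mem q (hC hy)
  rw [← Finset.sum_fiberwise_of_maps_to (hmaps Finset.subset_union_left),
    ← Finset.sum_fiberwise_of_maps_to (hmaps Finset.subset_union_right)]
  exact Finset.sum_lt_sum (fun c _ => hle c)
    ⟨q x, Finset.mem_image_of_mem q (by grind), hlt (q x) hqx⟩

end Exchange

theorem eventually_succ_eq_of_ne_imp_lt {X E : Type*} [PartialOrder E] [WellFoundedLT E]
    {s : ℕ → X} (energy : X → E)
    (h : ∀ k, s (k + 1) ≠ s k → energy (s (k + 1)) < energy (s k)) :
    ∀ᶠ k in atTop, s (k + 1) = s k := by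
  have hanti : Antitone (energy ∘ s) := antitone_nat_of_succ_le fun k => by
    by_cases hk : s (k + 1) = s k
    · simp only [Function.comp_apply, hk, le_refl]
    · exact (h k hk).le
  obtain ⟨K, hK⟩ := WellFoundedLT.antitone_chain_condition hanti
  filter_upwards [eventually_ge_atTop K] with k hk
  by_contra hne
  exact (h k hne).ne ((hK (k + 1) (by omega)).symm.trans (hK k hk))

theorem lt_nthLargest_iff {α : Type*} {v : α → NNReal} {n : ℕ} {t : NNReal} (hn : n ≠ 0)
    (ht : {x | t < v x}.Finite) : t < nthLargest v n ↔ n ≤ {x | t < v x}.ncard := by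
  constructor
  · intro h
    obtain ⟨s, ⟨Ω, rfl, hΩ⟩, hts⟩ :
        ∃ s ∈ {s | ∃ Ω : Finset α, Ω.card = n ∧ ∀ x ∈ Ω, s ≤ v x}, t < s := by
      contrapose! h
      exact csSup_le' h
    rw [← Set.ncard_coe_finset]
    exact Set.ncard_le_ncard (fun x hx => hts.trans_le (hΩ x hx)) ht
  · intro h
    rw [Set.ncard_eq_toFinset_card _ ht] at h
    obtain ⟨Ω, hsub, rfl⟩ := Finset.exists_subset_card_eq h
    have hΩ : Ω.Nonempty := Finset.card_ne_zero.1 hn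
    obtain ⟨x, hx, hmin⟩ := Finset.exists_min_image Ω v hΩ
    obtain ⟨C, hC⟩ : BddAbove (Set.range v) :=
      ((ht.image v).bddAbove.union (bddAbove_Iic (a := t))).mono <| by
        rintro _ ⟨y, rfl⟩
        exact (lt_or_ge t (v y)).imp (Set.mem_image_of_mem v) id
    have hbdd : BddAbove {s | ∃ Ω' : Finset α, Ω'.card = Ω.card ∧ ∀ y ∈ Ω', s ≤ v y} := by
      refine ⟨C, ?_⟩
      rintro s ⟨Ω', hcard, hs⟩
      obtain ⟨y, hy⟩ := Finset.card_ne_zero.1 (hcard ▸ hn)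
      exact (hs y hy).trans (hC ⟨y, rfl⟩)
    calc t < v x := by simpa using hsub hx
      _ ≤ nthLargest v Ω.card := le_csSup hbdd ⟨Ω, rfl, hmin⟩

/-- A partition of `α` into infinite lines (the classes of the setoid), each numbered
`1, 2, 3, …` by `pos`: the data along which a function can be rearranged decreasingly. -/
structure LineRanking (α : Type*) extends Setoid α where
  pos : α → ℕ
  bijOn_pos : ∀ x, Set.BijOn pos {y | r x y} (Set.Ici 1)

namespace LineRanking

variable {α : Type*} (L : LineRanking α) {A : Set α} {x y : α}

/-- The line through `x`. -/
def line (x : α) : Set α := {y | L.r x y}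

/-- The one-step rearrangement along the lines of `L`. -/
def rearrange (u : α → NNReal) (x : α) : NNReal :=
  nthLargest (fun y : L.line x => u y) (L.pos x)

/-- The one-step rearrangement of a set, i.e. of its indicator function: on each line, an initial
segment with as many points as the set has there. -/
def rearrangeSet (A : Set α) : Set α := {x | L.pos x ≤ (L.line x ∩ A).ncard}

/-- `φ` is strictly increasing along each line, in the order given by `pos`. -/
def StrictMonoAlong {M : Type*} [LT M] (φ : α → M) : Prop :=
  ∀ ⦃x y⦄, L.r x y → L.pos x < L.pos y → φ x < φ y

theorem pos_ne_zero (x : α) : L.pos x ≠ 0 :=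
  Nat.one_le_iff_ne_zero.1 ((L.bijOn_pos x).mapsTo (L.iseqv.refl x))

variable {L} in
theorem line_eq (h : L.r x y) : L.line x = L.line y :=
  Set.ext fun _ => ⟨L.iseqv.trans (L.iseqv.symm h), L.iseqv.trans h⟩

theorem bijOn_pos_line_inter_rearrangeSet (A : Set α) (x : α) :
    Set.BijOn L.pos (L.line x ∩ L.rearrangeSet A) (Set.Icc 1 (L.line x ∩ A).ncard) := by
  have heq : L.line x ∩ L.rearrangeSet A =
      L.line x ∩ L.pos ⁻¹' Set.Icc 1 (L.line x ∩ A).ncard := by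
    ext y
    refine and_congr_right fun hy => ?_
    change L.pos y ≤ (L.line y ∩ A).ncard ↔ 1 ≤ L.pos y ∧ L.pos y ≤ _
    rw [← line_eq hy, iff_and_self]
    exact fun _ => Nat.one_le_iff_ne_zero.2 (L.pos_ne_zero y)
  rw [heq]
  exact (L.bijOn_pos x).subset_right Set.Icc_subset_Ici_self

theorem ncard_line_inter_rearrangeSet (A : Set α) (x : α) :
    (L.line x ∩ L.rearrangeSet A).ncard = (L.line x ∩ A).ncard := by
  rw [(L.bijOn_pos_line_inter_rearrangeSet A x).ncard_eq, ← Finset.coe_Icc,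
    Set.ncard_coe_finset, Nat.card_Icc, Nat.add_sub_cancel]

theorem finite_rearrangeSet (hA : A.Finite) : (L.rearrangeSet A).Finite := by
  refine (hA.biUnion fun a _ => (L.bijOn_pos_line_inter_rearrangeSet A a).finite_iff_finite.2
    (Set.finite_Icc _ _)).subset fun x hx => ?_
  obtain ⟨a, hax, ha⟩ : (L.line x ∩ A).Nonempty :=
    Set.nonempty_of_ncard_ne_zero ((Nat.pos_of_ne_zero (L.pos_ne_zero x)).trans_le hx).ne'
  exact Set.mem_biUnion ha ⟨L.iseqv.symm hax, hx⟩

variable {L} in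
theorem pos_lt_pos_of_mem_of_notMem (h : L.r x y) (hx : x ∈ L.rearrangeSet A)
    (hy : y ∉ L.rearrangeSet A) : L.pos x < L.pos y := by
  simp only [rearrangeSet, Set.mem_ofPred_eq, not_le, ← line_eq h] at hx hy
  exact hx.trans_lt hy

theorem setOf_lt_rearrange {u : α → NNReal} {t : NNReal} (ht : {x | t < u x}.Finite) :
    {x | t < L.rearrange u x} = L.rearrangeSet {x | t < u x} := by
  ext x
  have htx : {y : L.line x | t < u y}.Finite :=
    ht.preimage (f := Subtype.val) Subtype.val_injective.injOn
  change t < nthLargest _ _ ↔ L.pos x ≤ _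
  rw [lt_nthLargest_iff (L.pos_ne_zero x) htx, ← Subtype.image_preimage_coe,
    Set.ncard_image_of_injective _ Subtype.val_injective, Set.preimage_ofPred_eq]

variable {M : Type*} [AddCommMonoid M] [LinearOrder M] [IsOrderedCancelAddMonoid M]

variable {L} in
theorem finsum_mem_rearrangeSet_lt {φ : α → M} (hφ : L.StrictMonoAlong φ) (hA : A.Finite)
    (hne : L.rearrangeSet A ≠ A) : ∑ᶠ x ∈ L.rearrangeSet A, φ x < ∑ᶠ x ∈ A, φ x := by
  classical
  obtain ⟨B, hB⟩ := (L.finite_rearrangeSet hA).exists_finset_coe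
  lift A to Finset α using hA
  have hmem (x : α) : x ∈ B ↔ x ∈ L.rearrangeSet A := by rw [← hB, Finset.mem_coe]
  rw [← hB, finsum_mem_coe_finset, finsum_mem_coe_finset]
  refine sum_lt_sum_of_fiberwise_exchange (Quotient.mk L.toSetoid) ?_ ?_ ?_
  · refine Quotient.ind fun x => ?_
    have hfiber (C : Finset α) : ((C.filter (Quotient.mk L.toSetoid · = ⟦x⟧) : Finset α) : Set α) =
        L.line x ∩ C := by
      ext y
      rw [Finset.coe_filter, Set.mem_ofPred_eq, Quotient.eq, and_comm]
      exact and_congr_left' ⟨L.iseqv.symm, L.iseqv.symm⟩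
    rw [← Set.ncard_coe_finset, ← Set.ncard_coe_finset, hfiber, hfiber, hB,
      L.ncard_line_inter_rearrangeSet]
  · rintro rfl
    exact hne hB.symm
  · intro a ha b hb hab
    rw [Finset.mem_sdiff, hmem] at ha hb
    have hba : L.r b a := L.iseqv.symm (Quotient.exact hab)
    exact hφ hba (pos_lt_pos_of_mem_of_notMem hba hb.1 ha.2)

/-- The successive rearrangements of the set `A` along `L 0, L 1, L 2, …`. -/
def iterRearrangeSet (L : ℕ → LineRanking α) (A : Set α) : ℕ → Set α
  | 0 => A
  | k + 1 => (L k).rearrangeSet (iterRearrangeSet L A k)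

variable {L : ℕ → LineRanking α}

theorem finite_iterRearrangeSet (hA : A.Finite) (k : ℕ) : (iterRearrangeSet L A k).Finite := by
  induction k with
  | zero => exact hA
  | succ k ih => exact (L k).finite_rearrangeSet ih

theorem setOf_lt_eq_iterRearrangeSet {v : ℕ → α → NNReal}
    (hv : ∀ k, v (k + 1) = (L k).rearrange (v k)) {t : NNReal} (ht : {x | t < v 0 x}.Finite)
    (k : ℕ) : {x | t < v k x} = iterRearrangeSet L {x | t < v 0 x} k := by
  induction k with
  | zero => rfl
  | succ k ih =>
    rw [hv, setOf_lt_rearrange _ (ih ▸ finite_iterRearrangeSet ht k), ih, iterRearrangeSet]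

variable [WellFoundedLT M] {φ : α → M}

theorem eventually_iterRearrangeSet_succ_eq
    (hφ : ∀ k, (L k).StrictMonoAlong φ) (hA : A.Finite) :
    ∀ᶠ k in atTop, iterRearrangeSet L A (k + 1) = iterRearrangeSet L A k :=
  eventually_succ_eq_of_ne_imp_lt (fun A => ∑ᶠ x ∈ A, φ x) fun k =>
    finsum_mem_rearrangeSet_lt (hφ k) (finite_iterRearrangeSet hA k)

theorem eventually_rearrange_eq
    (hφ : ∀ k, (L k).StrictMonoAlong φ)
    {v : ℕ → α → NNReal} (hv : ∀ k, v (k + 1) = (L k).rearrange (v k))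
    (hfin : (Function.support (v 0)).Finite) : ∀ᶠ k in atTop, v (k + 1) = v k := by
  have hsets : ∀ᶠ k in atTop, ∀ A ⊆ Function.support (v 0),
      iterRearrangeSet L A (k + 1) = iterRearrangeSet L A k :=
    (eventually_all_finite hfin.finite_subsets).2 fun A hA =>
      eventually_iterRearrangeSet_succ_eq hφ (hfin.subset hA)
  filter_upwards [hsets] with k hk
  refine funext fun x => eq_of_forall_lt_iff fun t => ?_
  have hsub : {x | t < v 0 x} ⊆ Function.support (v 0) := fun x hx => (pos_of_gt hx).ne'
  have hlevel := setOf_lt_eq_iterRearrangeSet hv (hfin.subset hsub)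
  exact Set.ext_iff.1 ((hlevel (k + 1)).trans ((hk _ hsub).trans (hlevel k).symm)) x

end LineRanking

theorem posIdx_ne_zero (m : ℤ) : posIdx m ≠ 0 := by
  unfold posIdx; split_ifs <;> omega

theorem posIdx_add_two_mul_injective (m : ℤ) :
    Function.Injective fun n : ℤ => posIdx (m + 2 * n) := by
  intro n n' h
  simp only [posIdx] at h
  split_ifs at h <;> omega

theorem exists_posIdx_add_two_mul_eq (m : ℤ) {k : ℕ} (hk : k ≠ 0) :
    ∃ n : ℤ, posIdx (m + 2 * n) = k := by
  rcases Int.even_or_odd' ((k : ℤ) - m) with ⟨n, hn | hn⟩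
  · exact ⟨n, by unfold posIdx; split_ifs <;> omega⟩
  · exact ⟨-m - n, by unfold posIdx; split_ifs <;> omega⟩

theorem pos_or_neg_of_posIdx_lt {m n : ℤ} (h : posIdx m < posIdx (m + 2 * n)) :
    0 < n ∧ 0 < m + n ∨ n < 0 ∧ m + n ≤ 0 := by
  unfold posIdx at h; split_ifs at h <;> omega

theorem sameLine_equivalence {d : ℕ} (e : Fin d → ℝ) : Equivalence (sameLine e) where
  refl x := ⟨0, by ext; simp⟩
  symm := by
    rintro x y ⟨c, hc⟩
    refine ⟨-c, ?_⟩
    rw [neg_smul, ← hc]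
    ext; simp
  trans := by
    rintro x y z ⟨c, hc⟩ ⟨c', hc'⟩
    refine ⟨c + c', ?_⟩
    rw [add_smul, ← hc, ← hc']
    ext; simp

/-- `w` is the primitive integer vector along `e`. Each `e ∈ E⃗` equals `w / |w|²` for such a `w`,
and `|w|² ∈ {1, 2}` makes `2⟨e, x⟩` an integer. -/
structure IsGenerator {d : ℕ} (e : Fin d → ℝ) (w : ZLat d) : Prop where
  apply_eq : ∀ k, e k = w k / (w ⬝ᵥ w : ℤ)
  dotProduct_self : w ⬝ᵥ w = 1 ∨ w ⬝ᵥ w = 2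
  exists_eq_one : ∃ i, w i = 1

namespace IsGenerator

variable {d : ℕ} {e : Fin d → ℝ} {w : ZLat d}

theorem dotProduct_self_pos (hw : IsGenerator e w) : 0 < w ⬝ᵥ w := by
  have := hw.dotProduct_self; omega

theorem sameLine_iff (hw : IsGenerator e w) {x y : ZLat d} :
    sameLine e x y ↔ ∃ n : ℤ, y = x + n • w := by
  have hN : ((w ⬝ᵥ w : ℤ) : ℝ) ≠ 0 := by exact_mod_cast hw.dotProduct_self_pos.ne'
  constructor
  · rintro ⟨c, hc⟩
    obtain ⟨i, hi⟩ := hw.exists_eq_one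
    have hcoord (k : Fin d) : (x k : ℝ) - y k = c / (w ⬝ᵥ w : ℤ) * w k := by
      rw [congrFun hc k, Pi.smul_apply, smul_eq_mul, hw.apply_eq]
      ring
    have hc' : c / (w ⬝ᵥ w : ℤ) = x i - y i := by simpa [hi] using (hcoord i).symm
    refine ⟨y i - x i, funext fun k => ?_⟩
    have hk := hcoord k
    rw [hc'] at hk
    have : (y k : ℝ) = x k + (y i - x i) * w k := by linarith
    exact_mod_cast this
  · rintro ⟨n, rfl⟩
    refine ⟨-(n * (w ⬝ᵥ w : ℤ)), funext fun k => ?_⟩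
    simp only [Pi.add_apply, Pi.smul_apply, smul_eq_mul, hw.apply_eq]
    push_cast
    field_simp
    ring

theorem dotProduct_self_mul_pairing (hw : IsGenerator e w) (x : ZLat d) :
    (w ⬝ᵥ w) * pairing e x = 2 * (w ⬝ᵥ x) := by
  have hsum : ∑ k, e k * (x k : ℝ) = (w ⬝ᵥ x : ℤ) / (w ⬝ᵥ w : ℤ) := by
    simp only [dotProduct, Int.cast_sum, Int.cast_mul, Finset.sum_div]
    exact Finset.sum_congr rfl fun k _ => by
      rw [hw.apply_eq, dotProduct]; push_cast; ring
  rw [pairing, hsum]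
  rcases hw.dotProduct_self with h | h
  · have : 2 * (((w ⬝ᵥ x : ℤ) : ℝ) / (1 : ℤ)) = (2 * (w ⬝ᵥ x) : ℤ) := by push_cast; ring
    rw [h, this, Int.floor_intCast, one_mul]
  · have : 2 * (((w ⬝ᵥ x : ℤ) : ℝ) / (2 : ℤ)) = (w ⬝ᵥ x : ℤ) := by push_cast; ring
    rw [h, this, Int.floor_intCast]

theorem pairing_add_smul (hw : IsGenerator e w) (x : ZLat d) (n : ℤ) :
    pairing e (x + n • w) = pairing e x + 2 * n := by
  apply mul_left_cancel₀ hw.dotProduct_self_pos.ne'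
  rw [mul_add, hw.dotProduct_self_mul_pairing, hw.dotProduct_self_mul_pairing, dotProduct_add,
    dotProduct_smul, smul_eq_mul]
  ring

theorem bijOn_posIdx_pairing (hw : IsGenerator e w) (x : ZLat d) :
    Set.BijOn (fun y => posIdx (pairing e y)) {y | sameLine e x y} (Set.Ici 1) := by
  refine ⟨fun y _ => Nat.one_le_iff_ne_zero.2 (posIdx_ne_zero _), ?_, ?_⟩
  · rintro y hy z hz hyz
    obtain ⟨m, rfl⟩ := hw.sameLine_iff.1 hy
    obtain ⟨n, rfl⟩ := hw.sameLine_iff.1 hz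
    simp only [hw.pairing_add_smul] at hyz
    rw [posIdx_add_two_mul_injective _ hyz]
  · intro k hk
    obtain ⟨n, hn⟩ := exists_posIdx_add_two_mul_eq (pairing e x) (Nat.one_le_iff_ne_zero.1 hk)
    exact ⟨x + n • w, hw.sameLine_iff.2 ⟨n, rfl⟩, by simp only [hw.pairing_add_smul, hn]⟩

/-- The lines in direction `e`, ranked as in the definition of `stepR e`. -/
def lineRanking (hw : IsGenerator e w) : LineRanking (ZLat d) where
  r := sameLine e
  iseqv := sameLine_equivalence e
  pos x := posIdx (pairing e x)
  bijOn_pos := hw.bijOn_posIdx_pairing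

end IsGenerator

/-- The center `z` from which distances are measured is `centerNum d / (2(d + 1))`. Its coordinates
lie in `(0, 1/2)` and are strictly decreasing, so that `0 < 2⟨e, z⟩ < 1` for all `e ∈ E⃗`. -/
def centerNum (d : ℕ) : ZLat d := fun i => d - (i : ℕ)

/-- The squared Euclidean distance from `x` to the center, times `(2(d + 1))²`. -/
def centerSqDist {d : ℕ} (x : ZLat d) : ℕ :=
  ∑ i, (2 * (d + 1) * x i - centerNum d i).natAbs ^ 2

section CenterSqDist

variable {d : ℕ} {e : Fin d → ℝ} {w : ZLat d}

theorem centerSqDist_add_smul (hw : IsGenerator e w) (x : ZLat d) (n : ℤ) :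
    (centerSqDist (x + n • w) : ℤ) = centerSqDist x +
      4 * (d + 1) * (n * ((d + 1) * (w ⬝ᵥ w) * (pairing e x + n) - centerNum d ⬝ᵥ w)) := by
  have hexpand : (centerSqDist (x + n • w) : ℤ) = centerSqDist x +
      4 * (d + 1) * (n * ((d + 1) * (2 * (w ⬝ᵥ x) + n * (w ⬝ᵥ w)) - centerNum d ⬝ᵥ w)) := by
    simp only [centerSqDist, dotProduct, Nat.cast_sum, Nat.cast_pow, Int.natCast_natAbs, sq_abs,
      Finset.mul_sum, ← Finset.sum_add_distrib, ← Finset.sum_sub_distrib]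
    exact Finset.sum_congr rfl fun k _ => by
      rw [Pi.add_apply, Pi.smul_apply, smul_eq_mul]
      ring
  rw [hexpand, ← hw.dotProduct_self_mul_pairing]
  ring

theorem strictMonoAlong_centerSqDist (hw : IsGenerator e w) (hpos : 0 < centerNum d ⬝ᵥ w)
    (hlt : centerNum d ⬝ᵥ w < (d + 1) * (w ⬝ᵥ w)) :
    hw.lineRanking.StrictMonoAlong (centerSqDist (d := d)) := by
  rintro x y hxy hlt_pos
  obtain ⟨n, rfl⟩ := hw.sameLine_iff.1 hxy
  change posIdx _ < posIdx _ at hlt_pos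
  rw [hw.pairing_add_smul] at hlt_pos
  have hincr : 0 < n * ((d + 1) * (w ⬝ᵥ w) * (pairing e x + n) - centerNum d ⬝ᵥ w) := by
    rcases pos_or_neg_of_posIdx_lt hlt_pos with ⟨hn, hm⟩ | ⟨hn, hm⟩
    · exact mul_pos hn (by nlinarith)
    · exact mul_pos_of_neg_of_neg hn (by nlinarith)
  rw [← Nat.cast_lt (α := ℤ), centerSqDist_add_smul hw]
  exact lt_add_of_pos_right _ (by positivity)

end CenterSqDist

theorem stdVec_apply {d : ℕ} (i k : Fin d) : stdVec d i k = (Pi.single i 1 : ZLat d) k := by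
  simp only [stdVec, Pi.single_apply, Int.cast_ite, Int.cast_one, Int.cast_zero]

theorem exists_isGenerator {d : ℕ} {e : Fin d → ℝ} (he : e ∈ Evec d) :
    ∃ w, IsGenerator e w ∧ 0 < centerNum d ⬝ᵥ w ∧
      centerNum d ⬝ᵥ w < (d + 1) * (w ⬝ᵥ w) := by
  rcases he with ⟨i, rfl⟩ | ⟨i, j, hij, rfl⟩ | ⟨i, j, hij, rfl⟩
  · have hw : (Pi.single i 1 : ZLat d) ⬝ᵥ Pi.single i 1 = 1 := by simp
    refine ⟨Pi.single i 1, ⟨fun k => ?_, Or.inl hw, i, by simp⟩, ?_⟩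
    · simp [stdVec_apply, hw]
    · simp only [hw, dotProduct_single_one, centerNum]
      omega
  · have hw : (Pi.single i 1 + Pi.single j 1 : ZLat d) ⬝ᵥ (Pi.single i 1 + Pi.single j 1) = 2 := by
      simp [hij.ne, hij.ne']
    refine ⟨Pi.single i 1 + Pi.single j 1, ⟨fun k => ?_, Or.inr hw, i, by simp [hij.ne]⟩, ?_⟩
    · simp [stdVec_apply, hw]
    · simp only [hw, dotProduct_add, dotProduct_single_one, centerNum]
      omega
  · have hw : (Pi.single i 1 - Pi.single j 1 : ZLat d) ⬝ᵥ (Pi.single i 1 - Pi.single j 1) = 2 := by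
      simp [hij.ne, hij.ne']
    refine ⟨Pi.single i 1 - Pi.single j 1, ⟨fun k => ?_, Or.inr hw, i, by simp [hij.ne]⟩, ?_⟩
    · simp [stdVec_apply, hw]
    · simp only [hw, dotProduct_sub, dotProduct_single_one, centerNum]
      omega

theorem eventually_stepR_eq {d : ℕ} {e : ℕ → Fin d → ℝ} (he : ∀ k, e k ∈ Evec d)
    {v : ℕ → ZLat d → NNReal} (hv : ∀ k, v (k + 1) = stepR (e k) (v k))
    (hfin : (Function.support (v 0)).Finite) : ∀ᶠ k in atTop, v (k + 1) = v k := by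
  choose w hw hpos hlt using fun k => exists_isGenerator (he k)
  exact LineRanking.eventually_rearrange_eq (L := fun k => (hw k).lineRanking)
    (fun k => strictMonoAlong_centerSqDist (hw k) (hpos k) (hlt k)) hv hfin

theorem stmt2_general {d : ℕ} {e : ℕ → Fin d → ℝ} (he : ∀ k, e k ∈ Evec d)
    {v : ℕ → ZLat d → NNReal} (hv : ∀ k, v (k + 1) = stepR (e k) (v k))
    (hfin : (Function.support (v 0)).Finite) :
    ∃ K : ℕ, (∀ f, (∃ᶠ k in atTop, e k = f) → stepR f (v K) = v K) ∧
      ∀ k : ℕ, K ≤ k → v k = v K := by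
  obtain ⟨K, hK⟩ := eventually_atTop.1 (eventually_stepR_eq he hv hfin)
  have hconst : ∀ k, K ≤ k → v k = v K := Nat.le_induction rfl fun k hk ih => (hK k hk).trans ih
  refine ⟨K, fun f hf => ?_, hconst⟩
  obtain ⟨k, hk, rfl⟩ := frequently_atTop.1 hf K
  rw [← hconst k hk, ← hv k, hK k hk]

theorem mem_evecList {d : ℕ} {e : Fin d → ℝ} : e ∈ EvecList d ↔ e ∈ Evec d := by
  simp [EvecList, Evec, eq_comm]

theorem getD_mod_length_mem {α : Type*} {l : List α} (hl : l ≠ []) (a : α) (k : ℕ) :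
    l.getD (k % l.length) a ∈ l := by
  rw [List.getD_eq_getElem _ _ (Nat.mod_lt k (List.length_pos_of_ne_nil hl))]
  exact List.getElem_mem _

theorem frequently_getD_mod_length_eq {α : Type*} {l : List α} {b : α} (hb : b ∈ l) (a : α) :
    ∃ᶠ k in atTop, l.getD (k % l.length) a = b := by
  obtain ⟨i, hi, rfl⟩ := List.getElem_of_mem hb
  refine (Nat.frequently_mod_eq hi).mono fun k hk => ?_
  rw [hk, List.getD_eq_getElem _ _ hi]

theorem evecList_ne_nil {d : ℕ} (hd : 0 < d) : EvecList d ≠ [] :=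
  List.ne_nil_of_mem (mem_evecList.2 (Or.inl ⟨⟨0, hd⟩, rfl⟩))

/-- For finitely supported `u` on ℤ^d (d ≥ 2) the iterated one-step rearrangements
stabilize: there is K with R_e(R^K u) = R^K u for every e ∈ E⃗, and R^k u = R^K u
for all k ≥ K. -/
theorem stmt2 (d : ℕ) (hd : 2 ≤ d) (u : ZLat d → NNReal)
    (hfin : (Function.support u).Finite) :
    ∃ K : ℕ, (∀ e ∈ Evec d, stepR e (iterR d u K) = iterR d u K) ∧
      ∀ k : ℕ, K ≤ k → iterR d u k = iterR d u K := by
  have he (k : ℕ) : (EvecList d).getD (k % (EvecList d).length) 0 ∈ Evec d :=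
    mem_evecList.1 (getD_mod_length_mem (evecList_ne_nil (by omega)) 0 k)
  obtain ⟨K, hfix, hconst⟩ := stmt2_general (v := iterR d u) he (fun _ => rfl) hfin
  exact ⟨K, fun e hmem => hfix e (frequently_getD_mod_length_eq (mem_evecList.2 hmem) 0), hconst⟩

end
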